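/- arXiv:2506.01169 — 3 statements merged into one kernel-verified Lean document; each statement's English description precedes it below -/
import Mathlib

section
/- Suppose Assumption A1 holds, the influence network is a star topology with center node 1 (C_{j1} = 1 and C_{ji} = 0 for all j ≠ 1 and all i ≠ 1), the center node is partially stubborn (0 < a_1 < 1), C_{1j} = 0 for all j ∈ V_p, and ∑_{j ∈ V_p, j ≠ 1} a_j/(1 − a_j) ≤ 1/(a_1(1 − a_1)) − 4/n. Let ν′ = (1/(2a_1)) e_1 + ∑_{j ≠ 1} e_j. Then every trajectory of the perception dynamics with reflected appraisals (system (11)) starting from p(0) ∈ Γ_n(0, ν′) converges to the unique equilibrium p* given by: p*_j = (1 − √(1 − 4a_j(1 − a_j)/n))/(2a_j) for j ∈ V_p with j ≠ 1; p*_1 = (1 − √(1 − (4a_1(1 − a_1)/n)(|V_p| − n ∑_{j ∈ V_p, j ≠ 1} p*_j)))/(2a_1); and p*_i = 1/n + C_{1i}(|V_p|/n − ∑_{j ∈ V_p} p*_j) for i ∈ V_f. -/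
/-!
On a star whose centre listens to no stubborn agent, the dynamics is triangular. Every stubborn
agent `j` other than the centre evolves autonomously by `x ↦ a x² + (1 - a) / n`; the centre
evolves by `x ↦ a₀ x² + c s`, with an input `c s` depending only on those agents; and a
non-stubborn agent is a continuous function of the previous state of the centre.

So everything rests on the recursion `x (s + 1) = a * x s ^ 2 + c s` with `c s → c` and a bounded
nonnegative `x`. Since `x ↦ a x²` is increasing on `[0, ∞)`, the limsup `L` and liminf `l` satisfy
`L ≤ a L² + c` and `a l² + c ≤ l`. The second inequality gives `l ≥ r`, where `r` is the smaller
root of `a x² - x + c`. The first gives `L ≤ r` as soon as `x` stays below the larger root, or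
below `1 / (2 a)`; the latter bound covers a double root as well (`tendsto_quad`).

For the noncentral agents the bound `x ≤ 1` suffices, because `a + (1 - a) / n < 1`. For the centre
the bound `x ≤ 1 / (2 a₀)` is invariant: `(1 - p) p ≤ 1 / 4` and the hypothesis on
`∑ a_j / (1 - a_j)` give `4 a₀ c s ≤ 1`. Finally the fixed point equations turn
`a_j / (1 - a_j) * (1 - p_j) * p_j` into `1 / n - p_j`, which yields the stated closed forms.
-/

open Matrix Finset

/-- `W(x) = diag(x) + (I - diag(x)) C`. -/
noncomputable def Wmat (n : ℕ) (C : Matrix (Fin n) (Fin n) ℝ) (x : Fin n → ℝ) :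
    Matrix (Fin n) (Fin n) ℝ :=
  Matrix.diagonal x + (1 - Matrix.diagonal x) * C

/-- The map of system (11): `p ↦ (I - A) W(p)ᵀ A (I - A)⁻¹ p + (I - A) 𝟙 / n`. -/
noncomputable def percMap (n : ℕ) (C : Matrix (Fin n) (Fin n) ℝ) (a : Fin n → ℝ)
    (p : Fin n → ℝ) : Fin n → ℝ :=
  ((1 - Matrix.diagonal a) * (Wmat n C p)ᵀ * Matrix.diagonal a *
      (1 - Matrix.diagonal a)⁻¹) *ᵥ p
    + (1 / (n : ℝ)) • ((1 - Matrix.diagonal a) *ᵥ (fun _ => (1 : ℝ)))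

/-- The `n`-simplex `Δ_n`. -/
def simplex (n : ℕ) : Set (Fin n → ℝ) := {x | (∀ i, 0 ≤ x i) ∧ ∑ i, x i = 1}

/-- The box `Γ_n(y, z) = {x : y ≤ x ≤ z}`. -/
def box (n : ℕ) (y z : Fin n → ℝ) : Set (Fin n → ℝ) := {x | ∀ i, y i ≤ x i ∧ x i ≤ z i}

/-- The limsup half of `tendsto_quad`. -/
lemma limsup_quad {a c M : ℝ} (ha : 0 < a) {x d : ℕ → ℝ}
    (hd : Filter.Tendsto d Filter.atTop (nhds c))
    (hx : ∀ s, x (s + 1) = a * x s ^ 2 + d s) (h0 : ∀ s, 0 ≤ x s) (hM : ∀ s, x s ≤ M) :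
    Filter.limsup x Filter.atTop ≤ a * (Filter.limsup x Filter.atTop) ^ 2 + c := by
  have hbu : Filter.IsBoundedUnder (· ≤ ·) Filter.atTop x :=
    Filter.isBoundedUnder_of ⟨M, hM⟩
  have hbl : Filter.IsBoundedUnder (· ≥ ·) Filter.atTop x :=
    Filter.isBoundedUnder_of ⟨0, h0⟩
  set L := Filter.limsup x Filter.atTop with hL
  have key : ∀ ε : ℝ, 0 < ε → L ≤ a * (L + ε) ^ 2 + (c + ε) := by
    intro ε hε
    have h1 : ∀ᶠ s in Filter.atTop, x s < L + ε :=
      Filter.eventually_lt_of_limsup_lt (by linarith) hbu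
    have h2 : ∀ᶠ s in Filter.atTop, d s < c + ε := hd.eventually_lt_const (by linarith)
    have h3 : ∀ᶠ s in Filter.atTop, x (s + 1) ≤ a * (L + ε) ^ 2 + (c + ε) := by
      filter_upwards [h1, h2] with s hs1 hs2
      rw [hx s]
      have := h0 s
      gcongr
    refine Filter.limsup_le_of_le hbl.isCoboundedUnder_le ?_
    rw [← Filter.map_add_atTop_eq_nat 1]
    exact h3
  have hcont : Filter.Tendsto (fun ε : ℝ => a * (L + ε) ^ 2 + (c + ε))
      (nhdsWithin 0 (Set.Ioi 0)) (nhds (a * (L + 0) ^ 2 + (c + 0))) :=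
    (Continuous.tendsto (by fun_prop) 0).mono_left nhdsWithin_le_nhds
  have := ge_of_tendsto hcont (Filter.eventually_of_mem self_mem_nhdsWithin key)
  simpa using this

/-- The liminf half of `tendsto_quad`. -/
lemma liminf_quad {a c M : ℝ} (ha : 0 < a) {x d : ℕ → ℝ}
    (hd : Filter.Tendsto d Filter.atTop (nhds c))
    (hx : ∀ s, x (s + 1) = a * x s ^ 2 + d s) (h0 : ∀ s, 0 ≤ x s) (hM : ∀ s, x s ≤ M) :
    a * (Filter.liminf x Filter.atTop) ^ 2 + c ≤ Filter.liminf x Filter.atTop := by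
  have hbu : Filter.IsBoundedUnder (· ≤ ·) Filter.atTop x :=
    Filter.isBoundedUnder_of ⟨M, hM⟩
  have hbl : Filter.IsBoundedUnder (· ≥ ·) Filter.atTop x :=
    Filter.isBoundedUnder_of ⟨0, h0⟩
  set L := Filter.liminf x Filter.atTop with hL
  have hL0 : 0 ≤ L :=
    Filter.le_liminf_of_le hbu.isCoboundedUnder_ge (Filter.Eventually.of_forall h0)
  -- `L - ε` may be negative, so it is truncated at `0` before squaring.
  have key : ∀ ε : ℝ, 0 < ε → a * (max (L - ε) 0) ^ 2 + (c - ε) ≤ L := by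
    intro ε hε
    have h1 : ∀ᶠ s in Filter.atTop, L - ε < x s :=
      Filter.eventually_lt_of_lt_liminf (by linarith) hbl
    have h2 : ∀ᶠ s in Filter.atTop, c - ε < d s := hd.eventually_const_lt (by linarith)
    have h3 : ∀ᶠ s in Filter.atTop, a * (max (L - ε) 0) ^ 2 + (c - ε) ≤ x (s + 1) := by
      filter_upwards [h1, h2] with s hs1 hs2
      rw [hx s]
      have : max (L - ε) 0 ≤ x s := max_le hs1.le (h0 s)
      gcongr
    refine Filter.le_liminf_of_le hbu.isCoboundedUnder_ge ?_
    rw [← Filter.map_add_atTop_eq_nat 1]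
    exact h3
  have hcont : Filter.Tendsto (fun ε : ℝ => a * (max (L - ε) 0) ^ 2 + (c - ε))
      (nhdsWithin 0 (Set.Ioi 0)) (nhds (a * (max (L - 0) 0) ^ 2 + (c - 0))) :=
    (Continuous.tendsto (by fun_prop) 0).mono_left nhdsWithin_le_nhds
  have := le_of_tendsto hcont (Filter.eventually_of_mem self_mem_nhdsWithin key)
  simpa [max_eq_left hL0] using this

/-- A bounded nonnegative solution of the asymptotically autonomous recursion
`x (s + 1) = a * x s ^ 2 + d s` converges to the smaller fixed point `r` of the limit map. The
hypothesis `2 * a * r ≤ 1` says that `r` is the smaller root, and `hsub` that the bound `M`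
excludes the region beyond the larger one. -/
lemma tendsto_quad {a c M r : ℝ} (ha : 0 < a) {x d : ℕ → ℝ}
    (hd : Filter.Tendsto d Filter.atTop (nhds c))
    (hx : ∀ s, x (s + 1) = a * x s ^ 2 + d s) (h0 : ∀ s, 0 ≤ x s) (hM : ∀ s, x s ≤ M)
    (hr : a * r ^ 2 + c = r) (hr2 : 2 * a * r ≤ 1)
    (hsub : ∀ y, y ≤ M → y ≤ a * y ^ 2 + c → y ≤ r) :
    Filter.Tendsto x Filter.atTop (nhds r) := by
  have hbu : Filter.IsBoundedUnder (· ≤ ·) Filter.atTop x :=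
    Filter.isBoundedUnder_of ⟨M, hM⟩
  have hbl : Filter.IsBoundedUnder (· ≥ ·) Filter.atTop x :=
    Filter.isBoundedUnder_of ⟨0, h0⟩
  refine tendsto_of_le_liminf_of_limsup_le ?_ ?_ hbu hbl
  · have h := liminf_quad ha hd hx h0 hM
    by_contra! hlt
    nlinarith [mul_pos ha (mul_pos (sub_pos.2 hlt) (sub_pos.2 hlt))]
  · refine hsub _ ?_ (limsup_quad ha hd hx h0 hM)
    exact Filter.limsup_le_of_le hbl.isCoboundedUnder_le (Filter.Eventually.of_forall hM)

/-- The smaller root of `a x² - x + c`: it is a root, and it lies left of the vertex. -/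
lemma quad_root {a c r : ℝ} (ha : 0 < a) (hc : 4 * a * c ≤ 1)
    (hr : r = (1 - Real.sqrt (1 - 4 * a * c)) / (2 * a)) :
    a * r ^ 2 + c = r ∧ 2 * a * r ≤ 1 := by
  have hs := Real.sq_sqrt (show 0 ≤ 1 - 4 * a * c by linarith)
  have hs0 := Real.sqrt_nonneg (1 - 4 * a * c)
  set t := Real.sqrt (1 - 4 * a * c)
  have h2 : 2 * a * r = 1 - t := by rw [hr]; field_simp
  refine ⟨?_, by linarith⟩
  have ht : t = 1 - 2 * a * r := by linarith
  rw [ht] at hs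
  have : 4 * a * (a * r ^ 2 + c - r) = 0 := by linarith
  have := (mul_eq_zero.1 this).resolve_left (by positivity)
  linarith

lemma percMap_apply {n : ℕ} (C : Matrix (Fin n) (Fin n) ℝ) (a : Fin n → ℝ)
    (ha1 : ∀ i, a i < 1) (p : Fin n → ℝ) (i : Fin n) :
    percMap n C a p i = a i * p i ^ 2
      + (1 - a i) * ∑ j, C j i * (a j / (1 - a j) * ((1 - p j) * p j)) + (1 - a i) / n := by
  have h1 : (1 : Matrix (Fin n) (Fin n) ℝ) - diagonal a = diagonal (fun i => 1 - a i) := by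
    rw [← diagonal_one, diagonal_sub]
  have h2 : (1 : Matrix (Fin n) (Fin n) ℝ) - diagonal p = diagonal (fun i => 1 - p i) := by
    rw [← diagonal_one, diagonal_sub]
  have hne : ∀ j, 1 - a j ≠ 0 := fun j => (sub_pos.2 (ha1 j)).ne'
  have h3 : (diagonal (fun i => 1 - a i) : Matrix (Fin n) (Fin n) ℝ)⁻¹
      = diagonal (fun i => (1 - a i)⁻¹) := by
    refine Matrix.inv_eq_right_inv ?_
    rw [diagonal_mul_diagonal, ← diagonal_one]
    congr 1
    funext j
    exact mul_inv_cancel₀ (hne j)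
  have hW : ∀ j, Wmat n C p j i = (if j = i then p j else 0) + (1 - p j) * C j i := by
    intro j
    simp [Wmat, h2, diagonal_mul, diagonal_apply]
  simp only [percMap, h1, h3, Pi.add_apply, Pi.smul_apply, mulVec_diagonal, mul_one, smul_eq_mul]
  simp only [mulVec, dotProduct, mul_diagonal, diagonal_mul, transpose_apply, hW]
  have h4 : ∀ j, (1 - a i) * ((if j = i then p j else 0) + (1 - p j) * C j i) * a j
        * (1 - a j)⁻¹ * p j
      = (if j = i then a j * p j ^ 2 else 0)
        + (1 - a i) * (C j i * (a j / (1 - a j) * ((1 - p j) * p j))) := by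
    intro j
    have := hne j
    by_cases h : j = i
    · subst h
      simp only [if_true]
      field_simp
    · simp only [h, if_false]
      field_simp
      ring
  simp only [h4, sum_add_distrib, ← mul_sum, sum_ite_eq', mem_univ, if_true]
  ring

/-- Theorem 4(ii): star topology with partially stubborn center node `0`;
all trajectories of system (11) starting in `Γ_n(0, ν′)` converge to the unique
equilibrium `p*`. -/
theorem star_partially_stubborn_center_convergence
    (n : ℕ) [NeZero n] (hn : 2 ≤ n)
    (C : Matrix (Fin n) (Fin n) ℝ)
    (hC0 : ∀ i j, 0 ≤ C i j) (hCrow : ∀ i, ∑ j, C i j = 1) (hCdiag : ∀ i, C i i = 0)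
    (a : Fin n → ℝ) (ha0 : ∀ i, 0 ≤ a i) (ha1 : ∀ i, a i < 1) (hane : a ≠ 0)
    (hstar1 : ∀ j : Fin n, j ≠ 0 → C j 0 = 1)
    (hstar2 : ∀ j : Fin n, j ≠ 0 → ∀ i : Fin n, i ≠ 0 → C j i = 0)
    (hcenter : 0 < a 0)
    (hC1p : ∀ j : Fin n, 0 < a j → C 0 j = 0)
    (hsum : ∑ j ∈ Finset.univ.filter (fun j => 0 < a j ∧ j ≠ 0), a j / (1 - a j) ≤
      1 / (a 0 * (1 - a 0)) - 4 / (n : ℝ))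
    (pstar : Fin n → ℝ)
    (hpp : ∀ j : Fin n, 0 < a j → j ≠ 0 →
      pstar j = (1 - Real.sqrt (1 - 4 * a j * (1 - a j) / n)) / (2 * a j))
    (hp1 : pstar 0 = (1 - Real.sqrt (1 - (4 * a 0 * (1 - a 0) / n) *
        (((Finset.univ.filter (fun j : Fin n => 0 < a j)).card : ℝ) -
          (n : ℝ) * ∑ j ∈ Finset.univ.filter (fun j => 0 < a j ∧ j ≠ 0), pstar j))) /
      (2 * a 0))
    (hpf : ∀ i : Fin n, a i = 0 → pstar i = 1 / (n : ℝ) +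
      C 0 i * (((Finset.univ.filter (fun j : Fin n => 0 < a j)).card : ℝ) / n -
        ∑ j ∈ Finset.univ.filter (fun j => 0 < a j), pstar j))
    (p : ℕ → Fin n → ℝ) (hp : ∀ s, p (s + 1) = percMap n C a (p s))
    (hp0 : p 0 ∈ box n 0 (fun i => if i = 0 then 1 / (2 * a 0) else 1)) :
    Filter.Tendsto p Filter.atTop (nhds pstar) := by
  have hnR : (2 : ℝ) ≤ n := by exact_mod_cast hn
  have hn0 : (0 : ℝ) < n := by linarith
  have hninv : 1 / (n : ℝ) ≤ 1 / 2 := one_div_le_one_div_of_le (by norm_num) hnR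
  have hninv0 : 0 < 1 / (n : ℝ) := by positivity
  set F := Finset.univ.filter (fun j : Fin n => 0 < a j ∧ j ≠ 0) with hF
  set g : (Fin n → ℝ) → Fin n → ℝ := fun q j => a j / (1 - a j) * ((1 - q j) * q j) with hg
  have hna : ∀ j, 0 < 1 - a j := fun j => sub_pos.2 (ha1 j)
  have step0 : ∀ s, p (s + 1) 0
      = a 0 * p s 0 ^ 2 + (1 - a 0) * (∑ j ∈ F, g (p s) j + 1 / n) := by
    intro s
    rw [hp s, percMap_apply C a ha1]
    have : ∑ j, C j 0 * (a j / (1 - a j) * ((1 - p s j) * p s j)) = ∑ j ∈ F, g (p s) j := by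
      rw [hF, sum_filter]
      refine sum_congr rfl fun j _ => ?_
      by_cases hj : j = 0
      · subst hj; simp [hCdiag]
      · rcases (ha0 j).eq_or_lt with h | h
        · simp [← h]
        · simp [h, hj, hstar1 j hj, hg]
    rw [this]
    ring
  have stepi : ∀ i, i ≠ 0 → ∀ s, p (s + 1) i
      = a i * p s i ^ 2 + (1 - a i) * (C 0 i * g (p s) 0 + 1 / n) := by
    intro i hi s
    rw [hp s, percMap_apply C a ha1,
      sum_eq_single 0 (fun j _ hj => by rw [hstar2 j hj i hi, zero_mul]) (by simp)]
    ring
  have stepp : ∀ i, i ≠ 0 → 0 < a i → ∀ s, p (s + 1) i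
      = a i * p s i ^ 2 + (1 - a i) / n := by
    intro i hi hai s
    rw [stepi i hi s, hC1p i hai]
    ring
  have bddp : ∀ i, i ≠ 0 → 0 < a i → ∀ s, 0 ≤ p s i ∧ p s i ≤ 1 := by
    intro i hi hai s
    induction s with
    | zero => simpa [hi] using hp0 i
    | succ s ih =>
      rw [stepp i hi hai s]
      have h1 : (1 - a i) / n ≤ 1 - a i := div_le_self (hna i).le (by linarith)
      have h2 : 0 ≤ (1 - a i) / n := div_nonneg (hna i).le hn0.le
      have h3 : p s i ^ 2 ≤ 1 := pow_le_one₀ ih.1 ih.2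
      constructor
      · positivity
      · nlinarith
  have rootp : ∀ i, i ≠ 0 → 0 < a i →
      a i * pstar i ^ 2 + (1 - a i) / n = pstar i ∧ 2 * a i * pstar i ≤ 1 := by
    intro i hi hai
    refine quad_root hai ?_ ?_
    · have : 4 * a i * ((1 - a i) / n) = 4 * (a i * (1 - a i)) * (1 / n) := by ring
      rw [this]
      nlinarith [sq_nonneg (2 * a i - 1), mul_pos hai (hna i)]
    · rw [hpp i hai hi, mul_div_assoc]
  have limp : ∀ i, i ≠ 0 → 0 < a i →
      Filter.Tendsto (fun s => p s i) Filter.atTop (nhds (pstar i)) := by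
    intro i hi hai
    obtain ⟨hr, hr2⟩ := rootp i hi hai
    refine tendsto_quad hai tendsto_const_nhds (stepp i hi hai)
      (fun s => (bddp i hi hai s).1) (fun s => (bddp i hi hai s).2) hr hr2 ?_
    intro y hy hyc
    by_contra! hlt
    have h1 : (1 - a i) / n < 1 - a i := div_lt_self (hna i) (by linarith)
    -- A chord argument: `y` lying beyond the larger root would put `1` beyond it as well.
    have h2 : 0 ≤ (y - pstar i) * (a i * (y + pstar i) - 1) := by nlinarith
    have h3 : 0 ≤ a i * (y + pstar i) - 1 := nonneg_of_mul_nonneg_right h2 (by linarith)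
    have h4 : 0 ≤ a i * (1 + pstar i) - 1 := by nlinarith
    nlinarith [mul_nonneg (show 0 ≤ 1 - pstar i by linarith) h4]
  have gstar : ∀ i, i ≠ 0 → 0 < a i → g pstar i = 1 / n - pstar i := by
    intro i hi hai
    have h := (rootp i hi hai).1
    have h2 : (1 - a i) / (n : ℝ) = (1 - a i) * (1 / n) := by ring
    simp only [hg]
    rw [div_mul_eq_mul_div, div_eq_iff (hna i).ne']
    rw [h2] at h
    linarith
  have hcard : ((Finset.univ.filter (fun j : Fin n => 0 < a j)).card : ℝ) = F.card + 1 := by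
    have : Finset.univ.filter (fun j : Fin n => 0 < a j) = insert 0 F := by
      ext j
      by_cases hj : j = 0
      · subst hj; simp [hcenter]
      · simp [hF, hj]
    rw [this, card_insert_of_notMem (by simp [hF])]
    push_cast
    ring
  have hsumins : ∑ j ∈ Finset.univ.filter (fun j : Fin n => 0 < a j), pstar j
      = pstar 0 + ∑ j ∈ F, pstar j := by
    have : Finset.univ.filter (fun j : Fin n => 0 < a j) = insert 0 F := by
      ext j
      by_cases hj : j = 0
      · subst hj; simp [hcenter]
      · simp [hF, hj]
    rw [this, sum_insert (by simp [hF])]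
  have sumg : ∑ j ∈ F, g pstar j = F.card / n - ∑ j ∈ F, pstar j := by
    have : ∑ j ∈ F, g pstar j = ∑ j ∈ F, (1 / (n : ℝ) - pstar j) := by
      refine sum_congr rfl fun j hj => ?_
      have := (mem_filter.1 hj).2
      exact gstar j this.2 this.1
    rw [this, sum_sub_distrib, sum_const, nsmul_eq_mul]
    ring
  set d : ℕ → ℝ := fun s => (1 - a 0) * (∑ j ∈ F, g (p s) j + 1 / n) with hd
  set c : ℝ := (1 - a 0) * (∑ j ∈ F, g pstar j + 1 / n) with hc
  have limd : Filter.Tendsto d Filter.atTop (nhds c) := by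
    refine Filter.Tendsto.const_mul _ (Filter.Tendsto.add_const _ ?_)
    refine tendsto_finsetSum _ fun j hj => ?_
    have := (mem_filter.1 hj).2
    have hl := limp j this.2 this.1
    exact ((hl.const_sub 1).mul hl).const_mul _
  have hd1 : ∀ s, 4 * a 0 * d s ≤ 1 := by
    intro s
    have h1 : ∑ j ∈ F, g (p s) j ≤ (∑ j ∈ F, a j / (1 - a j)) * (1 / 4) := by
      rw [sum_mul]
      refine sum_le_sum fun j _ => ?_
      refine mul_le_mul_of_nonneg_left ?_ (div_nonneg (ha0 j) (hna j).le)
      nlinarith [sq_nonneg (2 * p s j - 1)]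
    have h2 : ∑ j ∈ F, g (p s) j + 1 / n ≤ 1 / (a 0 * (1 - a 0)) * (1 / 4) := by
      have : 4 / (n : ℝ) = 4 * (1 / n) := by ring
      rw [this] at hsum
      linarith
    have h3 : 0 < a 0 * (1 - a 0) := mul_pos hcenter (hna 0)
    have h4 := mul_le_mul_of_nonneg_left h2 (mul_pos (show (0 : ℝ) < 4 by norm_num) h3).le
    have hne0 := (hna 0).ne'
    have h5 : 4 * (a 0 * (1 - a 0)) * (1 / (a 0 * (1 - a 0)) * (1 / 4)) = 1 := by
      field_simp
    rw [h5] at h4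
    simp only [hd]
    linarith
  have hd0 : ∀ s, 0 ≤ d s := by
    intro s
    refine mul_nonneg (hna 0).le (add_nonneg (sum_nonneg fun j hj => ?_) hninv0.le)
    have := (mem_filter.1 hj).2
    have hb := bddp j this.2 this.1 s
    exact mul_nonneg (div_nonneg (ha0 j) (hna j).le)
      (mul_nonneg (by linarith) hb.1)
  have hc1 : 4 * a 0 * c ≤ 1 := le_of_tendsto' (limd.const_mul (4 * a 0)) hd1
  have bdd0 : ∀ s, 0 ≤ p s 0 ∧ p s 0 ≤ 1 / (2 * a 0) := by
    intro s
    induction s with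
    | zero => simpa using hp0 0
    | succ s ih =>
      rw [step0 s]
      change 0 ≤ a 0 * p s 0 ^ 2 + d s ∧ a 0 * p s 0 ^ 2 + d s ≤ 1 / (2 * a 0)
      have h1 := hd0 s
      have h2 := hd1 s
      refine ⟨by positivity, ?_⟩
      have h3 := (le_div_iff₀ (by positivity)).1 ih.2
      rw [le_div_iff₀ (by positivity)]
      have h4 : (p s 0 * (2 * a 0)) ^ 2 ≤ 1 :=
        pow_le_one₀ (mul_nonneg ih.1 (by positivity)) h3
      linarith
  obtain ⟨hr, hr2⟩ : a 0 * pstar 0 ^ 2 + c = pstar 0 ∧ 2 * a 0 * pstar 0 ≤ 1 := by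
    refine quad_root hcenter hc1 ?_
    rw [hp1]
    congr 3
    rw [hc, sumg, hcard]
    field_simp
    ring
  have lim0 : Filter.Tendsto (fun s => p s 0) Filter.atTop (nhds (pstar 0)) := by
    refine tendsto_quad hcenter limd step0
      (fun s => (bdd0 s).1) (fun s => (bdd0 s).2) hr hr2 ?_
    intro y hy hyc
    by_contra! hlt
    have h3 := (le_div_iff₀ (by positivity)).1 hy
    have h4 : a 0 * (pstar 0 - y) < 0 := by nlinarith
    have h5 : 0 ≤ (y - pstar 0) * (a 0 * (y + pstar 0) - 1) := by nlinarith
    have h6 : 0 ≤ a 0 * (y + pstar 0) - 1 := nonneg_of_mul_nonneg_right h5 (by linarith)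
    nlinarith
  rw [tendsto_pi_nhds]
  intro i
  by_cases hi : i = 0
  · subst hi; exact lim0
  rcases (ha0 i).eq_or_lt with h | h
  · rw [← Filter.tendsto_add_atTop_iff_nat 1]
    have heq : ∀ s, p (s + 1) i = C 0 i * g (p s) 0 + 1 / n := by
      intro s
      rw [stepi i hi s, ← h]
      ring
    have hg0 : g pstar 0
        = ((Finset.univ.filter (fun j : Fin n => 0 < a j)).card : ℝ) / n
          - ∑ j ∈ Finset.univ.filter (fun j => 0 < a j), pstar j := by
      rw [hsumins, hcard]
      simp only [hg]
      rw [div_mul_eq_mul_div, div_eq_iff (hna 0).ne']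
      rw [hc, sumg] at hr
      have : ((F.card : ℝ) + 1) / n = F.card / n + 1 / n := by ring
      rw [this]
      linarith
    simp only [heq]
    rw [hpf i h.symm, ← hg0, add_comm]
    exact ((((lim0.const_sub 1).mul lim0).const_mul _).const_mul _).add_const _
  · exact limp i hi h
end

section
/- Consider the homogeneous-stubbornness perception dynamics p(s+1) = a W(p(s))^⊤ p(s) + ((1 − a)/n) 𝟙_n with a ∈ (0,1). Then the n-simplex Δ_n is positively invariant (in fact every point of Δ_n is mapped into the interior of Δ_n), and for any initial condition p(0) ∈ ℝ^n the total perceived power satisfies lim_{s→∞} ∑_{i=1}^n p_i(s) = 1. -/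
/-!
The rows of `W(p)` sum to `1` for every real `p`, because those of `C` do. Hence the total power
`S(s) = ∑ i, p_i(s)` obeys the scalar affine recursion `S(s+1) = a S(s) + (1 - a)`, whatever the
signs of the entries of `p(s)` (`sum_homoMap`). It fixes `S = 1`, and in general
`S(s) = 1 + a ^ s (S(0) - 1)`, which tends to `1`. On the simplex all coordinates lie in `[0, 1]`,
so `W(p)` is nonnegative and every coordinate of the image is at least `(1 - a) / n > 0`.
-/

open Matrix Finset

/-- The homogeneous-stubbornness perception dynamics map
`p ↦ a W(p)ᵀ p + ((1 - a)/n) 𝟙`. -/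
noncomputable def homoMap (n : ℕ) (C : Matrix (Fin n) (Fin n) ℝ) (a : ℝ)
    (p : Fin n → ℝ) : Fin n → ℝ :=
  a • ((Wmat n C p)ᵀ *ᵥ p) + ((1 - a) / (n : ℝ)) • (fun _ => (1 : ℝ))

lemma Wmat_apply (n : ℕ) (C : Matrix (Fin n) (Fin n) ℝ) (x : Fin n → ℝ) (i j : Fin n) :
    Wmat n C x i j = Matrix.diagonal x i j + (1 - x i) * C i j := by
  simp [Wmat, sub_mul, Matrix.diagonal_mul]

lemma sum_Wmat_row (n : ℕ) (C : Matrix (Fin n) (Fin n) ℝ) (hCrow : ∀ i, ∑ j, C i j = 1)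
    (x : Fin n → ℝ) (i : Fin n) : ∑ j, Wmat n C x i j = 1 := by
  simp only [Wmat_apply, Finset.sum_add_distrib, ← Finset.mul_sum, hCrow]
  simp [Matrix.diagonal_apply]

lemma homoMap_apply (n : ℕ) (C : Matrix (Fin n) (Fin n) ℝ) (a : ℝ) (p : Fin n → ℝ) (j : Fin n) :
    homoMap n C a p j = a * ∑ i, Wmat n C p i j * p i + (1 - a) / n := by
  simp [homoMap, Matrix.mulVec, dotProduct]

/-- The total power evolves by an affine map of itself, with no sign condition on `p`. -/
lemma sum_homoMap (n : ℕ) (hn : n ≠ 0) (C : Matrix (Fin n) (Fin n) ℝ)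
    (hCrow : ∀ i, ∑ j, C i j = 1) (a : ℝ) (p : Fin n → ℝ) :
    ∑ j, homoMap n C a p j = a * ∑ i, p i + (1 - a) := by
  have hn' : (n : ℝ) ≠ 0 := Nat.cast_ne_zero.mpr hn
  simp only [homoMap_apply, Finset.sum_add_distrib, ← Finset.mul_sum]
  rw [Finset.sum_comm]
  simp only [← Finset.sum_mul, sum_Wmat_row n C hCrow, one_mul]
  simp [mul_div_cancel₀ _ hn']

lemma Wmat_nonneg (n : ℕ) (C : Matrix (Fin n) (Fin n) ℝ) (hC0 : ∀ i j, 0 ≤ C i j)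
    (x : Fin n → ℝ) (hx0 : ∀ i, 0 ≤ x i) (hx1 : ∀ i, x i ≤ 1) (i j : Fin n) :
    0 ≤ Wmat n C x i j := by
  rw [Wmat_apply, Matrix.diagonal_apply]
  have h := mul_nonneg (sub_nonneg.mpr (hx1 i)) (hC0 i j)
  split_ifs
  · exact add_nonneg (hx0 i) h
  · simpa using h

/-- Theorem 5(i): for the homogeneous-stubbornness dynamics, the simplex
is positively invariant (indeed mapped into its interior), and the total perceived power
converges to 1 from any initial condition. -/
theorem homogeneous_invariance_and_total_power
    (n : ℕ) (hn : 2 ≤ n)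
    (C : Matrix (Fin n) (Fin n) ℝ)
    (hC0 : ∀ i j, 0 ≤ C i j) (hCrow : ∀ i, ∑ j, C i j = 1) (hCdiag : ∀ i, C i i = 0)
    (a : ℝ) (ha : a ∈ Set.Ioo (0 : ℝ) 1) :
    (∀ p ∈ simplex n, (∀ i, 0 < homoMap n C a p i) ∧ ∑ i, homoMap n C a p i = 1) ∧
    (∀ p : ℕ → Fin n → ℝ, (∀ s, p (s + 1) = homoMap n C a (p s)) →
      Filter.Tendsto (fun s => ∑ i, p s i) Filter.atTop (nhds 1)) := by
  obtain ⟨ha0, ha1⟩ := ha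
  have hn0 : n ≠ 0 := by omega
  have hnpos : (0 : ℝ) < n := by positivity
  refine ⟨?_, ?_⟩
  · rintro p ⟨hp0, hp1⟩
    refine ⟨fun j => ?_, ?_⟩
    · have hle : ∀ i, p i ≤ 1 := fun i =>
        hp1 ▸ Finset.single_le_sum (fun k _ => hp0 k) (Finset.mem_univ i)
      rw [homoMap_apply]
      exact add_pos_of_nonneg_of_pos
        (mul_nonneg ha0.le (Finset.sum_nonneg fun i _ =>
          mul_nonneg (Wmat_nonneg n C hC0 p hp0 hle i j) (hp0 i)))
        (div_pos (sub_pos.mpr ha1) hnpos)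
    · rw [sum_homoMap n hn0 C hCrow, hp1]
      ring
  · intro p hp
    have hclosed : ∀ s, ∑ i, p s i = 1 + a ^ s * (∑ i, p 0 i - 1) := by
      intro s
      induction s with
      | zero => simp
      | succ k ih =>
        rw [hp k, sum_homoMap n hn0 C hCrow, ih]
        ring
    rw [funext hclosed]
    simpa using
      ((tendsto_pow_atTop_nhds_zero_of_lt_one ha0.le ha1).mul_const (∑ i, p 0 i - 1)).const_add 1
end

section
/- Suppose Assumption A1 holds and let x ∈ int Δ_n. Then Φ(x) = (I_n − A W(x))^{−1} is well defined, and its diagonal entries strictly dominate the other entries in their column: Φ_{ii}(x) > Φ_{ji}(x) for every pair of indices i ≠ j. -/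
/-!
`M = diag(a) W(x)` is entrywise nonnegative and, since `W(x)` is row-stochastic, its `i`-th row
sums to `a i < 1`. For such strictly substochastic `M` a discrete maximum principle holds:
`(1 - M) v ≥ 0` forces `v ≥ 0` (look at a minimum of `v`). Applied to `v` and `-v`, it shows that
`1 - M` is injective, hence invertible, and it makes every column of the inverse nonnegative.
The `i`-th column `v` satisfies `v = e_i + M v`, so `v i ≥ 1`; a maximum of `v` attained at some
`p ≠ i` would give `v p = (M v) p ≤ a p * v p < v p`, a contradiction.
-/

open Matrix Finset

/-- Discrete minimum principle for a strictly substochastic matrix. -/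
lemma nonneg_of_substochastic {n : ℕ} {M : Matrix (Fin n) (Fin n) ℝ}
    (hM : ∀ i j, 0 ≤ M i j) (hr : ∀ i, ∑ j, M i j < 1) {v : Fin n → ℝ}
    (hv : ∀ i, (M *ᵥ v) i ≤ v i) (i : Fin n) : 0 ≤ v i := by
  obtain ⟨q, -, hq⟩ := Finset.exists_min_image Finset.univ v ⟨i, Finset.mem_univ i⟩
  have hle : (∑ j, M q j) * v q ≤ (M *ᵥ v) q := by
    simp only [Matrix.mulVec, dotProduct, Finset.sum_mul]
    exact Finset.sum_le_sum fun l _ =>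
      mul_le_mul_of_nonneg_left (hq l (Finset.mem_univ l)) (hM q l)
  have hq0 : 0 ≤ v q := by
    by_contra! h
    nlinarith [hv q, hr q]
  exact hq0.trans (hq i (Finset.mem_univ i))

lemma isUnit_one_sub_of_substochastic {n : ℕ} {M : Matrix (Fin n) (Fin n) ℝ}
    (hM : ∀ i j, 0 ≤ M i j) (hr : ∀ i, ∑ j, M i j < 1) : IsUnit (1 - M) := by
  rw [← Matrix.mulVec_injective_iff_isUnit]
  intro u w huw
  have h : M *ᵥ (u - w) = u - w := by
    simp only [Matrix.sub_mulVec, Matrix.one_mulVec] at huw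
    rw [Matrix.mulVec_sub]
    ext k
    have := congrFun huw k
    simp only [Pi.sub_apply] at this ⊢
    linarith
  have h' : M *ᵥ (w - u) = w - u := by
    rw [← neg_sub u w, Matrix.mulVec_neg, h]
  ext k
  have h1 := nonneg_of_substochastic hM hr (fun i => (congrFun h i).le) k
  have h2 := nonneg_of_substochastic hM hr (fun i => (congrFun h' i).le) k
  simp only [Pi.sub_apply] at h1 h2
  linarith

lemma inv_apply_lt_diag_of_substochastic {n : ℕ} {M : Matrix (Fin n) (Fin n) ℝ}
    (hM : ∀ i j, 0 ≤ M i j) (hr : ∀ i, ∑ j, M i j < 1) {i j : Fin n} (hij : i ≠ j) :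
    (1 - M)⁻¹ j i < (1 - M)⁻¹ i i := by
  have hU := (Matrix.isUnit_iff_isUnit_det _).mp (isUnit_one_sub_of_substochastic hM hr)
  obtain ⟨v, hv⟩ : ∃ v : Fin n → ℝ, ∀ k, v k = (1 - M)⁻¹ k i := ⟨_, fun _ => rfl⟩
  have heq : ∀ k, v k = (1 : Matrix (Fin n) (Fin n) ℝ) k i + (M *ᵥ v) k := by
    intro k
    have h := congrFun (congrFun (Matrix.mul_nonsing_inv (1 - M) hU) k) i
    rw [Matrix.sub_mul, Matrix.one_mul, Matrix.sub_apply, Matrix.mul_apply] at h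
    simp only [Matrix.mulVec, dotProduct, hv]
    linarith
  have hone : ∀ k, 0 ≤ (1 : Matrix (Fin n) (Fin n) ℝ) k i := by
    intro k
    rw [Matrix.one_apply]
    split_ifs <;> norm_num
  have hv0 : ∀ k, 0 ≤ v k :=
    nonneg_of_substochastic hM hr fun k => by linarith [heq k, hone k]
  have hvi : 0 < v i := by
    have h := heq i
    have h2 : 0 ≤ (M *ᵥ v) i := by
      simp only [Matrix.mulVec, dotProduct]
      exact Finset.sum_nonneg fun l _ => mul_nonneg (hM i l) (hv0 l)
    rw [Matrix.one_apply_eq] at h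
    linarith
  rw [← hv, ← hv]
  by_contra! hle
  -- If `v i ≤ v j`, the maximum of `v` is attained at an index other than `i`.
  obtain ⟨p, hpi, hp⟩ : ∃ p, p ≠ i ∧ ∀ l, v l ≤ v p := by
    obtain ⟨q, -, hq⟩ := Finset.exists_max_image Finset.univ v ⟨i, Finset.mem_univ i⟩
    by_cases hqi : q = i
    · subst hqi
      exact ⟨j, hij.symm, fun l => (hq l (Finset.mem_univ l)).trans hle⟩
    · exact ⟨q, hqi, fun l => hq l (Finset.mem_univ l)⟩
  have hmax : (M *ᵥ v) p ≤ (∑ l, M p l) * v p := by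
    simp only [Matrix.mulVec, dotProduct, Finset.sum_mul]
    exact Finset.sum_le_sum fun l _ => mul_le_mul_of_nonneg_left (hp l) (hM p l)
  have h := heq p
  rw [Matrix.one_apply_ne hpi] at h
  nlinarith [hr p, hp i]

/-- Lemma A.4(iv): for `x` in the interior of the simplex,
`Φ(x) = (I - A W(x))⁻¹` is well defined (the matrix `I - A W(x)` is a unit) and its
diagonal entries strictly dominate the other entries of their column. -/
theorem Phi_diagonal_dominance
    (n : ℕ) (hn : 2 ≤ n)
    (C : Matrix (Fin n) (Fin n) ℝ)
    (hC0 : ∀ i j, 0 ≤ C i j) (hCrow : ∀ i, ∑ j, C i j = 1) (hCdiag : ∀ i, C i i = 0)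
    (a : Fin n → ℝ) (ha0 : ∀ i, 0 ≤ a i) (ha1 : ∀ i, a i < 1) (hane : a ≠ 0)
    (x : Fin n → ℝ) (hx : ∀ i, 0 < x i) (hxsum : ∑ i, x i = 1) :
    IsUnit (1 - Matrix.diagonal a * Wmat n C x) ∧
    ∀ i j : Fin n, i ≠ j →
      (1 - Matrix.diagonal a * Wmat n C x)⁻¹ j i <
      (1 - Matrix.diagonal a * Wmat n C x)⁻¹ i i := by
  have hx1 : ∀ i, x i ≤ 1 := fun i =>
    hxsum ▸ Finset.single_le_sum (fun k _ => (hx k).le) (Finset.mem_univ i)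
  have hW : ∀ i j, Wmat n C x i j = Matrix.diagonal x i j + (1 - x i) * C i j := by
    intro i j
    simp [Wmat, Matrix.sub_mul, Matrix.diagonal_mul]
    ring
  have hM : ∀ i j, 0 ≤ (Matrix.diagonal a * Wmat n C x) i j := by
    intro i j
    rw [Matrix.diagonal_mul, hW]
    refine mul_nonneg (ha0 i) (add_nonneg ?_ (mul_nonneg (by linarith [hx1 i]) (hC0 i j)))
    rw [Matrix.diagonal_apply]
    split_ifs
    exacts [(hx i).le, le_rfl]
  have hr : ∀ i, ∑ j, (Matrix.diagonal a * Wmat n C x) i j < 1 := by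
    intro i
    have h : ∑ j, Wmat n C x i j = 1 := by
      simp only [hW, Finset.sum_add_distrib, ← Finset.mul_sum, hCrow, Matrix.diagonal_apply,
        Finset.sum_ite_eq, Finset.mem_univ, if_true]
      ring
    simp only [Matrix.diagonal_mul, ← Finset.mul_sum, h, mul_one]
    exact ha1 i
  exact ⟨isUnit_one_sub_of_substochastic hM hr,
    fun i j hij => inv_apply_lt_diag_of_substochastic hM hr hij⟩
end
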